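/- arXiv:2211.16946 — 2 statements merged into one kernel-verified Lean document; each statement's English description precedes it below -/
import Mathlib

section
/- Assume 0 ∈ Ω and the open ball B_ε(0) is contained in Ω. Then there exists a unique σ ∈ (0,1) such that ∫_{Ω_σ} φ_ε(x)² dx = (1/2) ∫_Ω φ_ε(x)² dx, where Ω_σ = {x ∈ Ω : φ_ε(x) > σ ε^{−N}}. -/
open MeasureTheory Filter Topology Bornology

noncomputable section

abbrev RD (N : ℕ) := EuclideanSpace ℝ (Fin N)

/-- The region `ℝ^{2N} ∖ (Ωᶜ × Ωᶜ)` of integration for the fractional Neumann form. -/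
def crossSet {N : ℕ} (Ω : Set (RD N)) : Set (RD N × RD N) := {p | p.1 ∈ Ω ∨ p.2 ∈ Ω}

/-- The bilinear form `⟨u,v⟩_{ε,s}`. -/
def fracPairing (N : ℕ) (CNs ε s : ℝ) (Ω : Set (RD N)) (u v : RD N → ℝ) : ℝ :=
  CNs * ε ^ (2 * s) / 2 *
      ∫ p in crossSet Ω, (u p.1 - u p.2) * (v p.1 - v p.2) / ‖p.1 - p.2‖ ^ ((N : ℝ) + 2 * s)
    + ∫ x in Ω, u x * v x

/-- Membership in the space `H^s_ε(Ω)`: measurability together with finiteness of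
`⟨u,u⟩_{ε,s}` (expressed as integrability of the nonnegative integrands). -/
def memHs (N : ℕ) (CNs ε s : ℝ) (Ω : Set (RD N)) (u : RD N → ℝ) : Prop :=
  Measurable u ∧
    IntegrableOn (fun p : RD N × RD N =>
      (u p.1 - u p.2) ^ 2 / ‖p.1 - p.2‖ ^ ((N : ℝ) + 2 * s)) (crossSet Ω) volume ∧
    IntegrableOn (fun x => (u x) ^ 2) Ω volume

/-- `F(t) = ∫_0^t f(τ) dτ`. -/
def primF (f : ℝ → ℝ) (t : ℝ) : ℝ := ∫ τ in (0:ℝ)..t, f τ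

/-- The energy functional `I_ε`. -/
def energy (N : ℕ) (CNs ε s : ℝ) (Ω : Set (RD N)) (f : ℝ → ℝ) (u : RD N → ℝ) : ℝ :=
  (1 / 2) * fracPairing N CNs ε s Ω u u - ∫ x in Ω, primF f (u x)

/-- Weak solution of the fractional Neumann problem. -/
def isWeakSolution (N : ℕ) (CNs ε s : ℝ) (Ω : Set (RD N)) (f : ℝ → ℝ) (u : RD N → ℝ) : Prop :=
  memHs N CNs ε s Ω u ∧
    ∀ v : RD N → ℝ, memHs N CNs ε s Ω v →
      fracPairing N CNs ε s Ω u v = ∫ x in Ω, f (u x) * v x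

def cond_f1 (f : ℝ → ℝ) : Prop := (∀ t < (0:ℝ), f t = 0) ∧ ∀ t > (0:ℝ), 0 < f t

def cond_f2 (f : ℝ → ℝ) (p : ℝ) : Prop :=
  Tendsto (fun t => f t / t) (𝓝[>] (0:ℝ)) (𝓝 0) ∧
    Tendsto (fun t => f t / t ^ (p - 1)) atTop (𝓝 0)

def cond_f3 (f : ℝ → ℝ) : Prop := Tendsto (fun t => f t / t) atTop atTop

def cond_f4 (f : ℝ → ℝ) : Prop :=
  ∃ θ > (2:ℝ), ∃ a₃ ≥ (0:ℝ), ∀ t ≥ a₃, 0 < θ * primF f t ∧ θ * primF f t ≤ t * f t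

def cond_f5 (f : ℝ → ℝ) : Prop :=
  ∃ α > (0:ℝ), ∀ t > (0:ℝ), f t = t → α ≤ t ^ 2 / 2 - primF f t

/-- The test function `φ_ε`. -/
def phiTest (N : ℕ) (ε : ℝ) (x : RD N) : ℝ :=
  if ‖x‖ ≤ ε then (ε ^ N)⁻¹ * (1 - ‖x‖ / ε) else 0

theorem phiTest_eq_max (N : ℕ) (ε : ℝ) (hε : 0 < ε) (x : RD N) :
    phiTest N ε x = (ε ^ N)⁻¹ * max 0 (1 - ‖x‖ / ε) := by
  unfold phiTest
  split_ifs with h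
  · rw [max_eq_right]
    have : ‖x‖ / ε ≤ 1 := (div_le_one hε).2 h
    linarith
  · rw [max_eq_left, mul_zero]
    have : 1 ≤ ‖x‖ / ε := (one_le_div hε).2 (le_of_lt (not_le.1 h))
    linarith

theorem phiTest_cont (N : ℕ) (ε : ℝ) (hε : 0 < ε) : Continuous (phiTest N ε) := by
  have : phiTest N ε = fun x => (ε ^ N)⁻¹ * max 0 (1 - ‖x‖ / ε) :=
    funext (phiTest_eq_max N ε hε)
  rw [this]
  fun_prop

theorem phiTest_gt_iff (N : ℕ) (ε : ℝ) (hε : 0 < ε) (x : RD N) (σ : ℝ) (hσ : 0 ≤ σ) :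
    phiTest N ε x > σ * (ε ^ N)⁻¹ ↔ ‖x‖ < (1 - σ) * ε := by
  have hc : 0 < (ε ^ N)⁻¹ := by positivity
  rw [phiTest_eq_max N ε hε, mul_comm σ, gt_iff_lt, mul_lt_mul_iff_right₀ hc, lt_max_iff,
    ← div_lt_iff₀ hε]
  constructor
  · rintro (h | h)
    · linarith
    · linarith
  · intro h
    right
    linarith

theorem phiTest_sq_integrable (N : ℕ) (ε : ℝ) (hε : 0 < ε) :
    Integrable (fun x : RD N => (phiTest N ε x) ^ 2) := by
  apply Continuous.integrable_of_hasCompactSupport ((phiTest_cont N ε hε).pow 2)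
  apply HasCompactSupport.intro (isCompact_closedBall (0 : RD N) ε)
  intro x hx
  have : ¬ ‖x‖ ≤ ε := by simpa using hx
  simp [phiTest, this]

/-- Mass of `φ²` in the ball of radius `r`. -/
def ballMass (N : ℕ) (ε : ℝ) (r : ℝ) : ℝ :=
  ∫ x in Metric.ball (0 : RD N) r, (phiTest N ε x) ^ 2

theorem ballMass_continuous (N : ℕ) (hN : 0 < N) (ε : ℝ) (hε : 0 < ε) :
    Continuous (ballMass N ε) := by
  haveI : Nonempty (Fin N) := ⟨⟨0, hN⟩⟩
  have heq : ballMass N ε = fun r => ∫ x : RD N,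
      (Metric.ball (0 : RD N) r).indicator (fun x => (phiTest N ε x) ^ 2) x := by
    funext r
    rw [ballMass, integral_indicator measurableSet_ball]
  rw [heq, continuous_iff_continuousAt]
  intro r
  apply continuousAt_of_dominated (bound := fun x => (phiTest N ε x) ^ 2)
  · exact Eventually.of_forall fun s =>
      (((phiTest_sq_integrable N ε hε).indicator measurableSet_ball)).aestronglyMeasurable
  · refine Eventually.of_forall fun s => Eventually.of_forall fun x => ?_
    refine (norm_indicator_le_norm_self _ _).trans ?_
    simp
  · exact phiTest_sq_integrable N ε hε
  · have hs : volume (Metric.sphere (0 : RD N) r) = 0 := Measure.addHaar_sphere _ _ _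
    filter_upwards [compl_mem_ae_iff.2 hs] with x hx
    have hne : ‖x‖ ≠ r := by simpa using hx
    rcases lt_or_gt_of_ne hne with h | h
    · refine ContinuousAt.congr (f := fun _ => (phiTest N ε x) ^ 2) continuousAt_const ?_
      filter_upwards [lt_mem_nhds h] with s hs'
      rw [Set.indicator_of_mem (by simpa using hs')]
    · refine ContinuousAt.congr (f := fun _ => (0 : ℝ)) continuousAt_const ?_
      filter_upwards [gt_mem_nhds h] with s hs'
      rw [Set.indicator_of_notMem (by simpa using hs'.le)]

theorem ballMass_lt (N : ℕ) (hN : 0 < N) (ε : ℝ) (hε : 0 < ε) (r s : ℝ) (hr : 0 ≤ r)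
    (hrs : r < s) (hs : s ≤ ε) : ballMass N ε r < ballMass N ε s := by
  haveI : Nonempty (Fin N) := ⟨⟨0, hN⟩⟩
  have hint := phiTest_sq_integrable N ε hε
  have hd : ∫ x in Metric.ball (0 : RD N) s \ Metric.ball 0 r, (phiTest N ε x) ^ 2 =
      ballMass N ε s - ballMass N ε r :=
    integral_diff measurableSet_ball hint.integrableOn (Metric.ball_subset_ball hrs.le)
  have hpos : 0 < ∫ x in Metric.ball (0 : RD N) s \ Metric.ball 0 r, (phiTest N ε x) ^ 2 := by
    rw [setIntegral_pos_iff_support_of_nonneg_ae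
      (Eventually.of_forall fun x => sq_nonneg _) hint.integrableOn]
    have hopen : IsOpen {x : RD N | r < ‖x‖ ∧ ‖x‖ < s} :=
      (isOpen_lt continuous_const continuous_norm).inter
        (isOpen_lt continuous_norm continuous_const)
    have hne : {x : RD N | r < ‖x‖ ∧ ‖x‖ < s}.Nonempty := by
      obtain ⟨x, hx⟩ := exists_norm_eq (RD N) (c := (r + s) / 2) (by linarith)
      exact ⟨x, by rw [hx]; linarith, by rw [hx]; linarith⟩
    refine (hopen.measure_pos volume hne).trans_le (measure_mono ?_)
    rintro x ⟨h1, h2⟩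
    refine ⟨?_, by simpa using h2, by simpa using h1.le⟩
    have h3 : phiTest N ε x > 0 * (ε ^ N)⁻¹ := by
      rw [phiTest_gt_iff N ε hε x 0 le_rfl]
      linarith
    rw [zero_mul] at h3
    exact (pow_pos h3 2).ne'
  linarith

/-- there is a unique `σ ∈ (0,1)` such that the superlevel set
`Ω_σ = {x ∈ Ω : φ_ε(x) > σ ε^{-N}}` carries half of the mass of `φ_ε²`. -/
theorem statement6
    (N : ℕ) (hN : 0 < N) (Ω : Set (RD N)) (hΩo : IsOpen Ω) (hΩb : IsBounded Ω)
    (h0 : (0 : RD N) ∈ Ω) (ε : ℝ) (hε : 0 < ε)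
    (hball : Metric.ball (0 : RD N) ε ⊆ Ω) :
    ∃! σ : ℝ, σ ∈ Set.Ioo (0:ℝ) 1 ∧
      ∫ x in {x ∈ Ω | phiTest N ε x > σ * (ε ^ N)⁻¹}, (phiTest N ε x) ^ 2 =
        (1 / 2) * ∫ x in Ω, (phiTest N ε x) ^ 2 := by
  have hset : ∀ σ ∈ Set.Ioo (0:ℝ) 1,
      {x ∈ Ω | phiTest N ε x > σ * (ε ^ N)⁻¹} = Metric.ball (0 : RD N) ((1 - σ) * ε) := by
    intro σ hσ
    ext x
    simp only [Set.mem_setOf_eq, phiTest_gt_iff N ε hε x σ hσ.1.le, mem_ball_zero_iff]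
    refine ⟨fun h => h.2, fun h => ⟨hball ?_, h⟩⟩
    rw [mem_ball_zero_iff]
    nlinarith [hσ.1]
  have htot : ∫ x in Ω, (phiTest N ε x) ^ 2 = ballMass N ε ε := by
    refine setIntegral_eq_of_subset_of_forall_diff_eq_zero hΩo.measurableSet hball ?_
    intro x hx
    have h : ε ≤ ‖x‖ := by simpa using hx.2
    rw [phiTest_eq_max N ε hε, max_eq_left]
    · simp
    · have := (one_le_div hε).2 h
      linarith
  have hzero : ballMass N ε 0 = 0 := by simp [ballMass]
  have hposε := ballMass_lt N hN ε hε 0 ε le_rfl hε le_rfl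
  rw [hzero] at hposε
  obtain ⟨r, hr, hrG⟩ := intermediate_value_Ioo hε.le
    (ballMass_continuous N hN ε hε).continuousOn
    (show (1 / 2) * ballMass N ε ε ∈ Set.Ioo (ballMass N ε 0) (ballMass N ε ε) by
      rw [hzero]; constructor <;> linarith)
  have hrε : (1 - (1 - r / ε)) * ε = r := by field_simp; ring
  have hmem : 1 - r / ε ∈ Set.Ioo (0:ℝ) 1 := by
    have h1 := (div_lt_one hε).2 hr.2
    have h2 := div_pos hr.1 hε
    constructor <;> linarith
  refine ⟨1 - r / ε, ⟨hmem, ?_⟩, ?_⟩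
  · rw [hset _ hmem, htot, hrε]
    exact hrG
  · rintro τ ⟨hτ, hτe⟩
    rw [hset _ hτ, htot] at hτe
    change ballMass N ε ((1 - τ) * ε) = _ at hτe
    have h1 : 0 ≤ (1 - τ) * ε := mul_nonneg (by linarith [hτ.2]) hε.le
    have h2 : (1 - τ) * ε ≤ ε := by nlinarith [hτ.1]
    have key : (1 - τ) * ε = r := by
      rcases lt_trichotomy ((1 - τ) * ε) r with h | h | h
      · have := ballMass_lt N hN ε hε _ _ h1 h hr.2.le
        linarith
      · exact h
      · have := ballMass_lt N hN ε hε _ _ hr.1.le h h2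
        linarith
    rw [← key]
    field_simp
    ring

end
end

section
/- Let α > 1 and M > 0. Define g_{α,M}(t) = t (min{t,M})^{α−1} for t ≥ 0, let h(τ) = √α · τ^{(α−1)/2} for 0 ≤ τ ≤ M and h(τ) = M^{(α−1)/2} for τ > M, and set G_{α,M}(t) = ∫_0^t h(τ) dτ. Then for all a, b ≥ 0, |G_{α,M}(a) − G_{α,M}(b)|² ≤ (g_{α,M}(a) − g_{α,M}(b))(a − b). -/
open MeasureTheory Filter Topology Bornology

noncomputable section

lemma aux_le (α M : ℝ) (hα : 1 < α) (hM : 0 < M) (h : ℝ → ℝ)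
    (hh : h = fun τ => if τ ≤ M then Real.sqrt α * τ ^ ((α - 1) / 2) else M ^ ((α - 1) / 2))
    (a b : ℝ) (hb : 0 ≤ b) (hab : b ≤ a) :
    ((∫ τ in (0:ℝ)..a, h τ) - ∫ τ in (0:ℝ)..b, h τ) ^ 2 ≤
        (a * (min a M) ^ (α - 1) - b * (min b M) ^ (α - 1)) * (a - b) := by
  have hmeas : Measurable h := by
    rw [hh]
    refine Measurable.ite measurableSet_Iic ?_ measurable_const
    fun_prop
  have hbd : ∀ x, 0 ≤ x → ‖h x‖ ≤ Real.sqrt α * M ^ ((α - 1) / 2) := by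
    intro x hx
    have hs : 1 ≤ Real.sqrt α := Real.one_le_sqrt.2 hα.le
    have hp : 0 ≤ M ^ ((α - 1) / 2) := by positivity
    rw [hh]
    dsimp only
    split_ifs with hc
    · rw [Real.norm_of_nonneg (by positivity)]
      gcongr
    · rw [Real.norm_of_nonneg hp]
      nlinarith
  have hint : ∀ c d, 0 ≤ c → c ≤ d → IntervalIntegrable h volume c d := by
    intro c d hc hd
    rw [intervalIntegrable_iff_integrableOn_Ioc_of_le hd]
    refine Measure.integrableOn_of_bounded (M := Real.sqrt α * M ^ ((α - 1) / 2))
      (by simp) hmeas.aestronglyMeasurable ?_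
    filter_upwards [ae_restrict_mem measurableSet_Ioc] with x hx
    exact hbd x (hc.trans hx.1.le)
  have hint2 : IntervalIntegrable (fun x => h x ^ 2) volume b a := by
    rw [intervalIntegrable_iff_integrableOn_Ioc_of_le hab]
    refine Measure.integrableOn_of_bounded (M := (Real.sqrt α * M ^ ((α - 1) / 2)) ^ 2)
      (by simp) (hmeas.pow_const 2).aestronglyMeasurable ?_
    filter_upwards [ae_restrict_mem measurableSet_Ioc] with x hx
    rw [norm_pow]
    exact pow_le_pow_left₀ (norm_nonneg _) (hbd x (hb.trans hx.1.le)) 2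
  have hI : (∫ τ in (0:ℝ)..a, h τ) - ∫ τ in (0:ℝ)..b, h τ = ∫ τ in b..a, h τ :=
    intervalIntegral.integral_interval_sub_left (hint 0 a le_rfl (hb.trans hab)) (hint 0 b le_rfl hb)
  have hsq : ∀ x : ℝ, 0 ≤ x → (x ^ ((α - 1) / 2)) ^ 2 = x ^ (α - 1) := by
    intro x hx
    rw [← Real.rpow_natCast, ← Real.rpow_mul hx]
    congr 1
    push_cast
    ring
  have hF : ∫ τ in b..a, h τ ^ 2 = a * (min a M) ^ (α - 1) - b * (min b M) ^ (α - 1) := by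
    refine MeasureTheory.integral_eq_of_hasDerivAt_off_countable_of_le
      (fun x => x * (min x M) ^ (α - 1)) (fun x => h x ^ 2) hab (Set.countable_singleton M)
      ?_ ?_ hint2
    · refine Continuous.continuousOn ?_
      refine continuous_id.mul ?_
      exact (continuous_id.min continuous_const).rpow_const (fun x => Or.inr (by linarith))
    · rintro x ⟨⟨hx1, hx2⟩, hxM⟩
      have hx0 : 0 < x := lt_of_le_of_lt hb hx1
      rcases lt_or_gt_of_ne (show x ≠ M from hxM) with hlt | hgt
      · have h1 : h x ^ 2 = α * x ^ (α - 1) := by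
          rw [hh]
          dsimp only
          rw [if_pos hlt.le, mul_pow, hsq x hx0.le, Real.sq_sqrt (by linarith)]
        rw [h1]
        refine (Real.hasDerivAt_rpow_const (p := α) (Or.inl hx0.ne')).congr_of_eventuallyEq ?_
        filter_upwards [Iio_mem_nhds hlt, Ioi_mem_nhds hx0] with y hy hy0
        have hy0' : (0:ℝ) < y := hy0
        rw [min_eq_left (le_of_lt hy), Real.rpow_sub_one hy0'.ne']
        field_simp
      · have h1 : h x ^ 2 = M ^ (α - 1) := by
          rw [hh]
          dsimp only
          rw [if_neg (not_le.2 hgt), hsq M hM.le]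
        rw [h1]
        have := (hasDerivAt_id x).mul_const (M ^ (α - 1))
        rw [one_mul] at this
        refine this.congr_of_eventuallyEq ?_
        filter_upwards [Ioi_mem_nhds hgt] with y hy
        rw [min_eq_right (le_of_lt hy)]
        rfl
  rw [hI, ← hF]
  rcases hab.eq_or_lt with rfl | hlt
  · simp
  have key : ∀ c : ℝ, 0 ≤ (∫ τ in b..a, h τ ^ 2) - 2 * c * (∫ τ in b..a, h τ) + c ^ 2 * (a - b) := by
    intro c
    have h0 : 0 ≤ ∫ τ in b..a, (h τ - c) ^ 2 :=
      intervalIntegral.integral_nonneg hab (fun x _ => sq_nonneg _)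
    have h1 : ∫ τ in b..a, (h τ - c) ^ 2 = ∫ τ in b..a, (h τ ^ 2 - 2 * c * h τ + c ^ 2) := by
      congr 1
      ext x
      ring
    have hi := hint b a hb hab
    rw [h1, intervalIntegral.integral_add (hint2.sub (hi.const_mul _)) (by simp),
      intervalIntegral.integral_sub hint2 (hi.const_mul _),
      intervalIntegral.integral_const_mul, intervalIntegral.integral_const, smul_eq_mul] at h0
    linarith
  have hpos : 0 < a - b := by linarith
  have k := key ((∫ τ in b..a, h τ) / (a - b))
  have k2 := mul_nonneg k hpos.le
  field_simp at k2
  nlinarith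

/-- `|G_{α,M}(a) - G_{α,M}(b)|² ≤ (g_{α,M}(a) - g_{α,M}(b))(a - b)`. -/
theorem statement11 (α M : ℝ) (hα : 1 < α) (hM : 0 < M) :
    ∀ a b : ℝ, 0 ≤ a → 0 ≤ b →
      |(∫ τ in (0:ℝ)..a,
            (if τ ≤ M then Real.sqrt α * τ ^ ((α - 1) / 2) else M ^ ((α - 1) / 2))) -
          ∫ τ in (0:ℝ)..b,
            (if τ ≤ M then Real.sqrt α * τ ^ ((α - 1) / 2) else M ^ ((α - 1) / 2))| ^ 2 ≤
        (a * (min a M) ^ (α - 1) - b * (min b M) ^ (α - 1)) * (a - b) := by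
  intro a b ha hb
  rw [sq_abs]
  rcases le_total b a with hab | hab
  · exact aux_le α M hα hM _ rfl a b hb hab
  · have := aux_le α M hα hM _ rfl b a ha hab
    rw [← neg_sq, neg_sub]
    refine this.trans (le_of_eq ?_)
    ring

end
end
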